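/- Consider a probability space (Ω, 𝔉, ℙ) and an infinite sequence of event pairs (A_i, B_i), i ∈ ℕ, that are mutually independent across i and identically distributed, i.e. ℙ(A_i) = ℙ(A_1), ℙ(B_i) = ℙ(B_1) and ℙ(A_i ∩ B_i) = ℙ(A_1 ∩ B_1) for all i. For each n ≥ 1 let E_n = (⋃_{i=1}^{n-1} (A_i ∩ B_i ∩ ⋂_{j<i} B_jᶜ)) ∪ (A_n ∩ ⋂_{j=1}^{n-1} B_jᶜ). If ℙ(B_1) > 0, then lim_{n→∞} ℙ(E_n) = ℙ(A_1 | B_1). -/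

import Mathlib

open MeasureTheory ProbabilityTheory Filter

theorem key_aux {Ω : Type*} [MeasurableSpace Ω] (μ : Measure Ω)
    (A B : ℕ → Set Ω)
    (hindep : iIndep (fun i => MeasurableSpace.generateFrom {A i, B i}) μ) (q : ENNReal)
    (hq : ∀ i, μ (B i)ᶜ = q) (i : ℕ) (S : Set Ω)
    (hS : MeasurableSet[MeasurableSpace.generateFrom {A i, B i}] S) :
    μ (S ∩ ⋂ j < i, (B j)ᶜ) = μ S * q ^ i := by
  classical
  have h := hindep.meas_biInter (S := Finset.range (i + 1))
    (s := fun j => if j = i then S else (B j)ᶜ) (by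
      intro j _
      by_cases hj : j = i
      · subst hj
        simpa using hS
      · simp only [hj, if_false]
        exact (MeasurableSpace.measurableSet_generateFrom (by simp)).compl)
  have e : (⋂ j ∈ Finset.range (i + 1), (if j = i then S else (B j)ᶜ))
      = S ∩ ⋂ j < i, (B j)ᶜ := by
    ext x
    simp only [Set.mem_iInter, Finset.mem_range, Set.mem_inter_iff]
    constructor
    · intro hx
      refine ⟨by simpa using hx i (by omega), fun j hj => ?_⟩
      have := hx j (by omega)
      rwa [if_neg (by omega)] at this
    · rintro ⟨h1, h2⟩ j hj
      by_cases hji : j = i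
      · rwa [if_pos hji]
      · rw [if_neg hji]
        exact h2 j (by omega)
  rw [e] at h
  rw [h, Finset.prod_range_succ, if_pos rfl, mul_comm]
  congr 1
  rw [Finset.prod_congr rfl (g := fun _ => q)]
  · simp
  · intro j hj
    rw [Finset.mem_range] at hj
    rw [if_neg (by omega), hq]

/-- The outage probability of the greedy `n`-resource system converges, as
`n → ∞`, to the conditional single-resource outage probability
`P(A₀ | B₀) = P(A₀ ∩ B₀)/P(B₀)`. -/
theorem stmt_2 {Ω : Type*} [MeasurableSpace Ω] (μ : Measure Ω) [IsProbabilityMeasure μ]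
    (A B : ℕ → Set Ω)
    (hA : ∀ i, MeasurableSet (A i)) (hB : ∀ i, MeasurableSet (B i))
    (hindep : iIndep (fun i => MeasurableSpace.generateFrom {A i, B i}) μ)
    (hAid : ∀ i, μ (A i) = μ (A 0))
    (hBid : ∀ i, μ (B i) = μ (B 0))
    (hABid : ∀ i, μ (A i ∩ B i) = μ (A 0 ∩ B 0))
    (hB0 : 0 < μ (B 0)) :
    Tendsto
      (fun n : ℕ =>
        μ ((⋃ i < n - 1, (A i ∩ B i ∩ ⋂ j < i, (B j)ᶜ)) ∪ (A (n - 1) ∩ ⋂ j < n - 1, (B j)ᶜ)))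
      atTop (nhds (μ (A 0 ∩ B 0) / μ (B 0))) := by
  have hq : ∀ i, μ (B i)ᶜ = 1 - μ (B 0) := fun i => by
    rw [prob_compl_eq_one_sub (hB i), hBid]
  have hq1 : 1 - μ (B 0) < 1 := ENNReal.sub_lt_self (by simp) (by simp) hB0.ne'
  have key := key_aux μ A B hindep _ hq
  have hAm : ∀ i, MeasurableSet[MeasurableSpace.generateFrom {A i, B i}] (A i) := fun i =>
    MeasurableSpace.measurableSet_generateFrom (by simp)
  have hBm : ∀ i, MeasurableSet[MeasurableSpace.generateFrom {A i, B i}] (B i) := fun i =>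
    MeasurableSpace.measurableSet_generateFrom (by simp)
  have hU : ∀ m : ℕ, μ (⋃ i < m, (A i ∩ B i ∩ ⋂ j < i, (B j)ᶜ))
      = ∑ i ∈ Finset.range m, μ (A 0 ∩ B 0) * (1 - μ (B 0)) ^ i := by
    intro m
    have e : (⋃ i < m, (A i ∩ B i ∩ ⋂ j < i, (B j)ᶜ))
        = ⋃ i ∈ Finset.range m, (A i ∩ B i ∩ ⋂ j < i, (B j)ᶜ) := by simp
    rw [e, measure_biUnion_finset]
    · refine Finset.sum_congr rfl fun i _ => ?_
      rw [key i _ ((hAm i).inter (hBm i)), hABid]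
    · intro i _ k _ hik
      refine Set.disjoint_left.2 ?_
      rintro x ⟨⟨_, h1⟩, h2⟩ ⟨⟨_, h3⟩, h4⟩
      simp only [Set.mem_iInter] at h2 h4
      rcases lt_or_gt_of_ne hik with h | h
      · exact h4 i h h1
      · exact h2 k h h3
    · intro i _
      exact ((hA i).inter (hB i)).inter
        (MeasurableSet.iInter fun j => MeasurableSet.iInter fun _ => (hB j).compl)
  have hsum : Tendsto (fun m : ℕ => ∑ i ∈ Finset.range m, μ (A 0 ∩ B 0) * (1 - μ (B 0)) ^ i)
      atTop (nhds (μ (A 0 ∩ B 0) / μ (B 0))) := by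
    have h := ENNReal.tendsto_nat_tsum (fun i => μ (A 0 ∩ B 0) * (1 - μ (B 0)) ^ i)
    rwa [ENNReal.tsum_mul_left, ENNReal.tsum_geometric,
      ENNReal.sub_sub_cancel (by simp) prob_le_one, ← div_eq_mul_inv] at h
  have hpow := ENNReal.tendsto_pow_atTop_nhds_zero_of_lt_one hq1
  have hup := hsum.add hpow
  rw [add_zero] at hup
  have main : Tendsto (fun m : ℕ =>
      μ ((⋃ i < m, (A i ∩ B i ∩ ⋂ j < i, (B j)ᶜ)) ∪ (A m ∩ ⋂ j < m, (B j)ᶜ)))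
      atTop (nhds (μ (A 0 ∩ B 0) / μ (B 0))) := by
    refine tendsto_of_tendsto_of_tendsto_of_le_of_le hsum hup (fun m => ?_) (fun m => ?_)
    · dsimp only
      rw [← hU m]
      exact measure_mono Set.subset_union_left
    · refine (measure_union_le _ _).trans ?_
      rw [hU m, key m _ (hAm m)]
      gcongr
      exact mul_le_of_le_one_left' prob_le_one
  exact main.comp (tendsto_sub_atTop_nat 1)
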